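/- Canonical valuation from a saturated set (Corollary 1): if Δ is an A-saturated set in H_K, then the valuation v = (v1,v2) defined by v1(B) = 1 iff B ∈ Δ and v2(B) = 1 iff ⊖B ∈ Δ belongs to F_K, and for every formula B, B ∈ Δ iff B is designated under v (i.e. v1(B)=1). -/

import Mathlib

/-- Formulas of the modal language: propositional variables, negation,
the modality ⊖ (here `box`), and implication. -/
inductive Form : Type
  | var : ℕ → Form
  | neg : Form → Form
  | box : Form → Form
  | imp : Form → Form → Form

/-- A valuation `v = (v1, v2)` over the 4-valued Nmatrix for the minimal modal
logic M: `v1` behaves classically on ¬ and →, and `v1(⊖A) = v2(A)`;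
`v2` is otherwise unconstrained. -/
structure Val where
  v1 : Form → Fin 2
  v2 : Form → Fin 2
  neg_eq : ∀ A, v1 (Form.neg A) = 1 - v1 A
  imp_eq : ∀ A B, v1 (Form.imp A B) = max (1 - v1 A) (v1 B)
  box_eq : ∀ A, v1 (Form.box A) = v2 A

/-- The Hilbert calculus H_K: H plus axiom schema (K). -/
inductive HK : Set Form → Form → Prop
  | hyp {Γ A} : A ∈ Γ → HK Γ A
  | ax1 {Γ} (A B : Form) : HK Γ (A.imp (B.imp A))
  | ax2 {Γ} (A B C : Form) :
      HK Γ ((A.imp (B.imp C)).imp ((A.imp B).imp (A.imp C)))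
  | ax3 {Γ} (A B : Form) : HK Γ ((B.neg.imp A.neg).imp (A.imp B))
  | axK {Γ} (A B : Form) :
      HK Γ ((Form.box (A.imp B)).imp ((Form.box A).imp (Form.box B)))
  | mp {Γ A B} : HK Γ (A.imp B) → HK Γ A → HK Γ B

/-- The restriction defining F_K: valuations satisfying the (K) condition. -/
def FK (v : Val) : Prop :=
  ∀ A B : Form, v.v2 (A.imp B) ≤ max (1 - v.v2 A) (v.v2 B)

/-- Δ is A-saturated (in H_K): Δ ⊬ A but Δ ∪ {B} ⊢ A for every B ∉ Δ. -/
def Saturated (Δ : Set Form) (A : Form) : Prop :=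
  ¬ HK Δ A ∧ ∀ B : Form, B ∉ Δ → HK (insert B Δ) A

/-!
A saturated set `Δ` is deductively closed: if `Δ ⊢ B` and `B ∉ Δ`, cutting
`B` out of `Δ, B ⊢ A` would give `Δ ⊢ A`. It contains exactly one of `B` and `¬B`: both would prove
`A` by explosion, and if neither belonged to `Δ`, reasoning by cases on `B` would prove `A`.
Membership in `Δ` therefore commutes with `¬` and `→`, and closure under the axiom (K) is precisely
the inequality that defines `F_K`.
-/

namespace HK

variable {Γ Γ' : Set Form} {A B : Form}

theorem mono (hsub : Γ ⊆ Γ') (h : HK Γ A) : HK Γ' A := by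
  induction h with
  | hyp hmem => exact .hyp (hsub hmem)
  | ax1 A B => exact .ax1 A B
  | ax2 A B C => exact .ax2 A B C
  | ax3 A B => exact .ax3 A B
  | axK A B => exact .axK A B
  | mp _ _ ihImp ihArg => exact .mp ihImp ihArg

theorem weaken (h : HK Γ A) : HK (insert B Γ) A :=
  h.mono (Set.subset_insert B Γ)

theorem hyp_insert : HK (insert A Γ) A :=
  .hyp (Set.mem_insert A Γ)

theorem imp_self (A : Form) : HK Γ (A.imp A) :=
  .mp (.mp (.ax2 A (A.imp A) A) (.ax1 A (A.imp A))) (.ax1 A A)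

theorem imp_of (h : HK Γ B) : HK Γ (A.imp B) :=
  .mp (.ax1 B A) h

theorem deduction (h : HK (insert A Γ) B) : HK Γ (A.imp B) := by
  induction h with
  | hyp hmem =>
    rcases hmem with rfl | hmem
    · exact imp_self _
    · exact imp_of (.hyp hmem)
  | ax1 B C => exact imp_of (.ax1 B C)
  | ax2 B C D => exact imp_of (.ax2 B C D)
  | ax3 B C => exact imp_of (.ax3 B C)
  | axK B C => exact imp_of (.axK B C)
  | mp _ _ ihImp ihArg => exact .mp (.mp (.ax2 _ _ _) ihImp) ihArg

theorem cut (h : HK (insert A Γ) B) (hA : HK Γ A) : HK Γ B :=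
  .mp h.deduction hA

theorem imp_of_neg (h : HK Γ A.neg) : HK Γ (A.imp B) :=
  .mp (.ax3 A B) h.imp_of

theorem explosion (hneg : HK Γ A.neg) (h : HK Γ A) : HK Γ B :=
  .mp hneg.imp_of_neg h

theorem of_insert_neg (h : HK (insert A.neg Γ) A) : HK Γ A := by
  -- By `h`, `¬A` is contradictory, so it implies even `¬(¬A → A)`; axiom 3 gives `(¬A → A) → A`.
  have neg_self_imp : HK Γ (A.neg.imp (A.neg.imp A).neg) := (explosion hyp_insert h).deduction
  exact .mp (.mp (.ax3 (A.neg.imp A) A) neg_self_imp) h.deduction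

theorem of_neg_neg (h : HK Γ A.neg.neg) : HK Γ A :=
  of_insert_neg (explosion h.weaken hyp_insert)

theorem neg_of_insert (h : HK (insert A Γ) A.neg) : HK Γ A.neg :=
  of_insert_neg (.mp h.deduction.weaken (of_neg_neg hyp_insert))

theorem of_insert_of_insert_neg (hpos : HK (insert B Γ) A) (hneg : HK (insert B.neg Γ) A) :
    HK Γ A := by
  refine of_insert_neg ?_
  have not_B : HK (insert A.neg Γ) B.neg :=
    neg_of_insert (explosion hyp_insert.weaken
      (hpos.mono (Set.insert_subset_insert (Set.subset_insert A.neg Γ))))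
  exact .mp hneg.deduction.weaken not_B

end HK

namespace Saturated

variable {Δ : Set Form} {A B C : Form}

theorem mem_of_provable (hΔ : Saturated Δ A) (h : HK Δ B) : B ∈ Δ := by
  by_contra hB
  exact hΔ.1 ((hΔ.2 B hB).cut h)

theorem neg_mem_iff (hΔ : Saturated Δ A) : B.neg ∈ Δ ↔ B ∉ Δ := by
  constructor
  · intro hneg hB
    exact hΔ.1 (.explosion (.hyp hneg) (.hyp hB))
  · intro hB
    by_contra hneg
    exact hΔ.1 (.of_insert_of_insert_neg (hΔ.2 B hB) (hΔ.2 B.neg hneg))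

theorem imp_mem_iff (hΔ : Saturated Δ A) : B.imp C ∈ Δ ↔ (B ∈ Δ → C ∈ Δ) := by
  constructor
  · intro himp hB
    exact hΔ.mem_of_provable (.mp (.hyp himp) (.hyp hB))
  · intro h
    by_cases hB : B ∈ Δ
    · exact hΔ.mem_of_provable (.imp_of (.hyp (h hB)))
    · exact hΔ.mem_of_provable (.imp_of_neg (.hyp (hΔ.neg_mem_iff.2 hB)))

theorem box_mem_of_box_imp_mem (hΔ : Saturated Δ A) (himp : (B.imp C).box ∈ Δ) (hB : B.box ∈ Δ) :
    C.box ∈ Δ :=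
  hΔ.mem_of_provable (.mp (.mp (.axK B C) (.hyp himp)) (.hyp hB))

end Saturated

open Classical in
/-- The truth value of a proposition as an element of `Fin 2`, the type in which `Val` takes its
values; it turns membership in a set of formulas into a two-valued function. -/
noncomputable def truthValue (p : Prop) : Fin 2 :=
  if p then 1 else 0

section truthValue

variable {p q : Prop}

theorem truthValue_eq_one_iff : truthValue p = 1 ↔ p := by
  simp [truthValue]

theorem truthValue_not : truthValue (¬p) = 1 - truthValue p := by
  by_cases hp : p <;> simp [truthValue, hp]

theorem truthValue_imp : truthValue (p → q) = max (1 - truthValue p) (truthValue q) := by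
  by_cases hp : p <;> by_cases hq : q <;> simp [truthValue, hp, hq]

theorem truthValue_mono (h : p → q) : truthValue p ≤ truthValue q := by
  by_cases hp : p
  · simp [truthValue, hp, h hp]
  · simp [truthValue, hp]

end truthValue

namespace Saturated

variable {Δ : Set Form} {A : Form}

/-- The canonical valuation of a saturated set `Δ`: `v1 B` is the truth value of `B ∈ Δ`, and
`v2 B` that of `⊖B ∈ Δ`. -/
noncomputable def canonicalVal (hΔ : Saturated Δ A) : Val where
  v1 B := truthValue (B ∈ Δ)
  v2 B := truthValue (B.box ∈ Δ)
  neg_eq B := by rw [hΔ.neg_mem_iff, truthValue_not]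
  imp_eq B C := by rw [hΔ.imp_mem_iff, truthValue_imp]
  box_eq _ := rfl

theorem canonicalVal_v1_eq_one_iff (hΔ : Saturated Δ A) (B : Form) :
    hΔ.canonicalVal.v1 B = 1 ↔ B ∈ Δ :=
  truthValue_eq_one_iff

theorem canonicalVal_v2_eq_one_iff (hΔ : Saturated Δ A) (B : Form) :
    hΔ.canonicalVal.v2 B = 1 ↔ B.box ∈ Δ :=
  truthValue_eq_one_iff

theorem FK_canonicalVal (hΔ : Saturated Δ A) : FK hΔ.canonicalVal := fun B C =>
  calc truthValue ((B.imp C).box ∈ Δ)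
    _ ≤ truthValue (B.box ∈ Δ → C.box ∈ Δ) := truthValue_mono hΔ.box_mem_of_box_imp_mem
    _ = max (1 - truthValue (B.box ∈ Δ)) (truthValue (C.box ∈ Δ)) := truthValue_imp

end Saturated

/-- Canonical valuation from an A-saturated set (Corollary 1): the valuation
determined by membership in Δ (and by membership of ⊖B for the second
component) lies in F_K and designates exactly the members of Δ. -/
theorem canonical_valuation (Δ : Set Form) (A : Form) (hΔ : Saturated Δ A) :
    ∃ v : Val,
      (∀ B : Form, v.v1 B = 1 ↔ B ∈ Δ) ∧
      (∀ B : Form, v.v2 B = 1 ↔ Form.box B ∈ Δ) ∧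
      FK v ∧
      (∀ B : Form, B ∈ Δ ↔ v.v1 B = 1) := by
  exact ⟨hΔ.canonicalVal, hΔ.canonicalVal_v1_eq_one_iff, hΔ.canonicalVal_v2_eq_one_iff,
    hΔ.FK_canonicalVal, fun B => (hΔ.canonicalVal_v1_eq_one_iff B).symm⟩
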